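/- Let v, w ∈ [0,1]. Then 𝒬(w,v) ≥ 0 for every boundary entropy flux pair (ℱ,𝒬) if and only if w ∈ [0, 1 − max{1/2, v}] ∪ {v}. (This is the pointwise characterisation of the right boundary condition in Proposition 2.4.) -/

import Mathlib

open Set

/-- A Lax entropy flux pair for the flux `J u = u * (1 - u)`:
`F`, `Q` are twice continuously differentiable with `Q' = (1 - 2u) F'`
and `F'' ≥ 0` on `[0,1]`. -/
def IsLaxPair (F Q : ℝ → ℝ) : Prop :=
  ContDiff ℝ 2 F ∧ ContDiff ℝ 2 Q ∧
  (∀ u ∈ Set.Icc (0:ℝ) 1, deriv Q u = (1 - 2*u) * deriv F u) ∧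
  (∀ u ∈ Set.Icc (0:ℝ) 1, 0 ≤ deriv (deriv F) u)

/-- A boundary entropy flux pair: for each `v ∈ [0,1]`, `(F ·  v, Q · v)` is a
Lax entropy flux pair and `F v v = ∂_u F(u,v)|_{u=v} = Q v v = 0`. -/
def IsBoundaryPair (F Q : ℝ → ℝ → ℝ) : Prop :=
  ∀ v ∈ Set.Icc (0:ℝ) 1,
    IsLaxPair (fun u => F u v) (fun u => Q u v) ∧
    F v v = 0 ∧ deriv (fun u => F u v) v = 0 ∧ Q v v = 0

/-! Integrating `Q' = J' F'` by parts gives `Q(w, v) = ∫_v^w (J w - J u) F''(u, v) du`. Since `F''`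
can be any nonnegative continuous function, in particular the negative part of
`(w - v) (J w - J u)`, one has `Q(w, v) ≥ 0` for all pairs exactly when
`(w - v) (J w - J u) ≥ 0` for every `u` between `v` and `w`. Factoring
`J w - J u = (w - u) (1 - u - w)` turns this into `w = v`, or `w ≤ 1 / 2` and `w ≤ 1 - v`. -/

section SignedInterval

theorem uIcc_eq_image_lineMap {𝕜 : Type*} [Field 𝕜] [LinearOrder 𝕜] [IsStrictOrderedRing 𝕜]
    (a b : 𝕜) : uIcc a b = AffineMap.lineMap a b '' Icc (0 : 𝕜) 1 := by
  rw [← segment_eq_uIcc, segment_eq_image_lineMap]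

theorem intervalIntegral_eq_integral_lineMap {E : Type*} [NormedAddCommGroup E]
    [NormedSpace ℝ E] (f : ℝ → E) (a b : ℝ) :
    ∫ u in a..b, f u = ∫ t in (0 : ℝ)..1, (b - a) • f (AffineMap.lineMap a b t) := by
  simp [AffineMap.lineMap_apply_ring', mul_comm _ (b - a)]

variable {f : ℝ → ℝ} {a b : ℝ}

theorem intervalIntegral_nonneg_of_sub_mul_nonneg (h : ∀ u ∈ uIcc a b, 0 ≤ (b - a) * f u) :
    0 ≤ ∫ u in a..b, f u := by
  rw [uIcc_eq_image_lineMap, forall_mem_image] at h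
  rw [intervalIntegral_eq_integral_lineMap]
  exact intervalIntegral.integral_nonneg zero_le_one fun t ht => h ht

theorem intervalIntegral_pos_of_sub_mul_nonneg (hf : ContinuousOn f (uIcc a b))
    (h : ∀ u ∈ uIcc a b, 0 ≤ (b - a) * f u) (hpos : ∃ u ∈ uIcc a b, 0 < (b - a) * f u) :
    0 < ∫ u in a..b, f u := by
  rw [uIcc_eq_image_lineMap] at hf
  rw [uIcc_eq_image_lineMap, forall_mem_image] at h
  rw [uIcc_eq_image_lineMap, exists_mem_image] at hpos
  have hcont : ContinuousOn (fun t => f (AffineMap.lineMap a b t)) (Icc (0 : ℝ) 1) :=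
    hf.comp AffineMap.lineMap_continuous.continuousOn (mapsTo_image _ _)
  rw [intervalIntegral_eq_integral_lineMap]
  exact intervalIntegral.integral_pos zero_lt_one (hcont.const_smul (b - a))
    (fun t ht => h (Ioc_subset_Icc_self ht)) hpos

theorem exists_continuous_nonneg_integral_mul_neg (hf : Continuous f)
    (h : ∃ u ∈ uIcc a b, (b - a) * f u < 0) :
    ∃ g : ℝ → ℝ, Continuous g ∧ (∀ u, 0 ≤ g u) ∧ ∫ u in a..b, f u * g u < 0 := by
  let g : ℝ → ℝ := fun u => max 0 (-((b - a) * f u))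
  have hg : Continuous g := by fun_prop
  have hsq (u : ℝ) : (b - a) * -(f u * g u) = g u ^ 2 := by
    rcases max_cases 0 (-((b - a) * f u)) with ⟨hu, -⟩ | ⟨hu, -⟩ <;>
      · simp only [g, hu]
        ring
  refine ⟨g, hg, fun u => le_max_left _ _, ?_⟩
  rw [← neg_pos, ← intervalIntegral.integral_neg]
  obtain ⟨c, hc, hfc⟩ := h
  refine intervalIntegral_pos_of_sub_mul_nonneg (by fun_prop)
    (fun u _ => (hsq u).symm ▸ sq_nonneg _) ⟨c, hc, ?_⟩
  rw [hsq]
  exact pow_pos (lt_max_of_lt_right (neg_pos.2 hfc)) 2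

end SignedInterval

section VectorValued

variable {E : Type*} [NormedAddCommGroup E] [NormedSpace ℝ E] [CompleteSpace E]

theorem sub_eq_integral_of_hasDerivAt_smul {J J' : ℝ → ℝ} {f f' Q : ℝ → E} {a b : ℝ}
    (hJ : ∀ u ∈ uIcc a b, HasDerivAt J (J' u) u) (hf : ∀ u ∈ uIcc a b, HasDerivAt f (f' u) u)
    (hQ : ∀ u ∈ uIcc a b, HasDerivAt Q (J' u • f u) u)
    (hf' : IntervalIntegrable f' MeasureTheory.volume a b) :
    Q b - Q a = (J b - J a) • f a + ∫ u in a..b, (J b - J u) • f' u := by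
  have hderiv : ∀ u ∈ uIcc a b,
      HasDerivAt (fun u => Q u + (J b - J u) • f u) ((J b - J u) • f' u) u := fun u hu =>
    ((hQ u hu).add (((hJ u hu).const_sub (J b)).smul (hf u hu))).congr_deriv (by module)
  have hcont : ContinuousOn (fun u => J b - J u) (uIcc a b) := fun u hu =>
    ((hJ u hu).const_sub (J b)).continuousAt.continuousWithinAt
  rw [intervalIntegral.integral_eq_sub_of_hasDerivAt hderiv (hf'.continuousOn_smul hcont)]
  module

theorem exists_contDiff_deriv_eq {f : ℝ → E} {n : ℕ∞} (hf : ContDiff ℝ n f) (a : ℝ) :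
    ∃ g : ℝ → E, ContDiff ℝ (n + 1) g ∧ deriv g = f ∧ g a = 0 := by
  have hderiv (u : ℝ) : HasDerivAt (fun u => ∫ t in a..u, f t) (f u) u :=
    (hf.continuous.integral_hasStrictDerivAt a u).hasDerivAt
  have hderiv_eq : deriv (fun u => ∫ t in a..u, f t) = f := funext fun u => (hderiv u).deriv
  refine ⟨fun u => ∫ t in a..u, f t, contDiff_succ_iff_deriv.2 ⟨fun u =>
    (hderiv u).differentiableAt, by simp, ?_⟩, hderiv_eq, intervalIntegral.integral_same⟩
  rwa [hderiv_eq]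

end VectorValued

/-- The flux `J` of the conservation law; the factor `1 - 2 * u` in `IsLaxPair` is `J'`. -/
def logisticFlux (u : ℝ) : ℝ := u * (1 - u)

theorem continuous_logisticFlux : Continuous logisticFlux := by
  unfold logisticFlux
  fun_prop

theorem hasDerivAt_logisticFlux (u : ℝ) : HasDerivAt logisticFlux (1 - 2 * u) u :=
  ((hasDerivAt_id' u).mul ((hasDerivAt_id' u).const_sub 1)).congr_deriv (by ring)

theorem logisticFlux_sub (w u : ℝ) :
    logisticFlux w - logisticFlux u = (w - u) * (1 - u - w) := by
  unfold logisticFlux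
  ring

theorem sub_mul_sub_nonneg_of_mem_uIcc {R : Type*} [Ring R] [LinearOrder R] [IsOrderedRing R]
    {u v w : R} (hu : u ∈ uIcc v w) : 0 ≤ (w - v) * (w - u) := by
  rcases mem_uIcc.1 hu with ⟨hvu, huw⟩ | ⟨hwu, huv⟩
  · exact mul_nonneg (sub_nonneg.2 (hvu.trans huw)) (sub_nonneg.2 huw)
  · exact mul_nonneg_of_nonpos_of_nonpos (sub_nonpos.2 (hwu.trans huv)) (sub_nonpos.2 hwu)

theorem forall_sub_mul_logisticFlux_sub_nonneg_iff {v w : ℝ} :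
    (∀ u ∈ uIcc v w, 0 ≤ (w - v) * (logisticFlux w - logisticFlux u)) ↔
      w ≤ 1 - max (1 / 2) v ∨ w = v := by
  simp only [logisticFlux_sub]
  rw [le_sub_comm, max_le_iff]
  constructor
  · intro h
    refine or_iff_not_imp_right.2 fun hne => ?_
    have hatv : 0 ≤ (w - v) ^ 2 * (1 - v - w) := by linarith [h v left_mem_uIcc]
    have hsum : 0 ≤ 1 - v - w :=
      nonneg_of_mul_nonneg_right hatv (sq_pos_of_ne_zero (sub_ne_zero.2 hne))
    refine ⟨?_, by linarith⟩
    by_contra! hlt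
    have hw : 1 / 2 < w := by linarith
    have hv : v < 1 / 2 := by linarith
    have hathalf : (w - v) * ((w - 1 / 2) * (1 - 1 / 2 - w)) < 0 :=
      mul_neg_of_pos_of_neg (by linarith) (mul_neg_of_pos_of_neg (by linarith) (by linarith))
    exact hathalf.not_ge (h (1 / 2) (mem_uIcc_of_le hv.le hw.le))
  · rintro (⟨hhalf, hsum⟩ | rfl) u hu
    · have huw : u ≤ 1 - w := hu.2.trans (max_le (by linarith) (by linarith))
      rw [← mul_assoc]
      exact mul_nonneg (sub_mul_sub_nonneg_of_mem_uIcc hu) (by linarith)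
    · rw [sub_self, zero_mul]

theorem IsLaxPair.flux_eq_integral {F Q : ℝ → ℝ} (h : IsLaxPair F Q) {v w : ℝ}
    (hv : v ∈ Icc (0 : ℝ) 1) (hw : w ∈ Icc (0 : ℝ) 1) (hF : deriv F v = 0) (hQ : Q v = 0) :
    Q w = ∫ u in v..w, (logisticFlux w - logisticFlux u) * deriv (deriv F) u := by
  obtain ⟨hFC, hQC, hQF, -⟩ := h
  have hF' : ContDiff ℝ 1 (deriv F) := hFC.deriv'
  have hQderiv : ∀ u ∈ uIcc v w, HasDerivAt Q ((1 - 2 * u) * deriv F u) u := fun u hu =>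
    hQF u (uIcc_subset_Icc hv hw hu) ▸ (hQC.differentiable two_ne_zero u).hasDerivAt
  simpa [hF, hQ] using sub_eq_integral_of_hasDerivAt_smul
    (fun u _ => hasDerivAt_logisticFlux u)
    (fun u _ => (hF'.differentiable one_ne_zero u).hasDerivAt) hQderiv
    ((hF'.continuous_deriv le_rfl).intervalIntegrable v w)

theorem exists_isLaxPair_deriv_deriv_eq {g : ℝ → ℝ} (hg : Continuous g)
    (hg0 : ∀ u ∈ Icc (0 : ℝ) 1, 0 ≤ g u) (v : ℝ) :
    ∃ F Q : ℝ → ℝ, IsLaxPair F Q ∧ F v = 0 ∧ deriv F v = 0 ∧ Q v = 0 ∧ deriv (deriv F) = g := by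
  obtain ⟨f, hf, rfl, hfv⟩ := exists_contDiff_deriv_eq (n := 0) (contDiff_zero.2 hg) v
  obtain ⟨F, hF, rfl, hFv⟩ := exists_contDiff_deriv_eq (n := 1) (by simpa using hf) v
  have hQ' : ContDiff ℝ 1 fun u => (1 - 2 * u) * deriv F u := by
    have hlin : ContDiff ℝ 1 fun u : ℝ => 1 - 2 * u := by fun_prop
    exact hlin.mul (by simpa using hf)
  obtain ⟨Q, hQ, hQF, hQv⟩ := exists_contDiff_deriv_eq (n := 1) hQ' v
  refine ⟨F, Q, ⟨?_, ?_, fun u _ => congrFun hQF u, hg0⟩, hFv, hfv, hQv, rfl⟩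
  · simpa [one_add_one_eq_two] using hF
  · simpa [one_add_one_eq_two] using hQ

theorem exists_isBoundaryPair_deriv_deriv_eq {g : ℝ → ℝ} (hg : Continuous g)
    (hg0 : ∀ u ∈ Icc (0 : ℝ) 1, 0 ≤ g u) :
    ∃ F Q : ℝ → ℝ → ℝ, IsBoundaryPair F Q ∧ ∀ v, deriv (deriv fun u => F u v) = g := by
  choose F Q hL hF hF' hQ hF'' using exists_isLaxPair_deriv_deriv_eq hg hg0
  exact ⟨fun u v => F v u, fun u v => Q v u, fun v _ => ⟨hL v, hF v, hF' v, hQ v⟩, hF''⟩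

theorem forall_isBoundaryPair_nonneg_iff {v w : ℝ} (hv : v ∈ Icc (0 : ℝ) 1)
    (hw : w ∈ Icc (0 : ℝ) 1) :
    (∀ F Q : ℝ → ℝ → ℝ, IsBoundaryPair F Q → 0 ≤ Q w v) ↔
      ∀ u ∈ uIcc v w, 0 ≤ (w - v) * (logisticFlux w - logisticFlux u) := by
  constructor
  · contrapose!
    intro h
    obtain ⟨g, hg, hg0, hneg⟩ := exists_continuous_nonneg_integral_mul_neg
      (continuous_const.sub continuous_logisticFlux) h
    obtain ⟨F, Q, hFQ, hF''⟩ := exists_isBoundaryPair_deriv_deriv_eq hg fun u _ => hg0 u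
    obtain ⟨hL, -, hF', hQ⟩ := hFQ v hv
    refine ⟨F, Q, hFQ, ?_⟩
    rwa [hL.flux_eq_integral hv hw hF' hQ, hF'' v]
  · intro h F Q hFQ
    obtain ⟨hL, -, hF', hQ⟩ := hFQ v hv
    rw [hL.flux_eq_integral hv hw hF' hQ]
    refine intervalIntegral_nonneg_of_sub_mul_nonneg fun u hu => ?_
    rw [← mul_assoc]
    exact mul_nonneg (h u hu) (hL.2.2.2 u (uIcc_subset_Icc hv hw hu))

/-- Pointwise characterisation of the right boundary condition (Proposition 2.4):
`Q w v ≥ 0` for every boundary entropy flux pair iff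
`w ∈ [0, 1 − max(1/2, v)] ∪ {v}`. -/
theorem stmt1 (v w : ℝ) (hv : v ∈ Set.Icc (0:ℝ) 1) (hw : w ∈ Set.Icc (0:ℝ) 1) :
    (∀ F Q : ℝ → ℝ → ℝ, IsBoundaryPair F Q → 0 ≤ Q w v) ↔
      (w ∈ Set.Icc (0:ℝ) (1 - max (1/2) v) ∨ w = v) := by
  rw [forall_isBoundaryPair_nonneg_iff hv hw, forall_sub_mul_logisticFlux_sub_nonneg_iff,
    mem_Icc, and_iff_right hw.1]
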